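/- There exist two smooth embeddings K₁, K₂ : 𝕊¹ → ℝ³ such that: (a) K₁ and K₂ are strongly invertible Legendrian knots; (b) both are unknotted (each is connected to the standard round circle θ ↦ (cos θ, sin θ, 0) by a smooth family of embeddings of 𝕊¹ into ℝ³); (c) K₁ and K₂ are connected by a smooth family of Legendrian embeddings of 𝕊¹ into ℝ³ (they are isotopic as unoriented Legendrian knots); (d) K₁ and K₂ are connected by a smooth family of strongly invertible embeddings (they are equivalent as strongly invertible knots); but (e) there is no smooth map H : ℝ × 𝕊¹ → ℝ³ such that H(t,·) is a strongly invertible Legendrian knot for every t ∈ [0,1], H(0,·) = K₁, and H(1,·) has the same image as K₂. That is, K₁ and K₂ are not equivalent as strongly invertible Legendrian knots. -/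

import Mathlib

/-!
A Legendrian curve whose projection to the `xy`-plane has horizontal velocity at a point of the
`x`-axis is tangent to the axis there, and a `τ`-invariant curve tangent to the axis is fixed by
`τ` near that point. So along a path of strongly invertible Legendrian knots the two crossings of
the axis have `y' ≠ 0`; they never collide, and the sign of `y'` at the left one is constant. The
winding number of the planar velocity `(x', y')` is constant as well, because the contact planes
project isomorphically to the `xy`-plane.

The knots `K₁` and `K₂` are Legendrian unknots over chains of three lobes, lying along the
`x`-axis for `K₁` and along the `y`-axis for `K₂`, the outer lobes being traversed in the
direction opposite to the central one. Orient both such that the winding number is `-1`, that is,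
such that the central lobe is traversed counterclockwise. The left crossing is the tip of an outer
lobe of `K₁`, which is traversed upwards, but a point of the central lobe of `K₂`, which is
traversed downwards.

On the other hand `K₂` is `K₁` rotated by a quarter turn, and rotations of the `xy`-plane lift to
contactomorphisms of `ℝ³`. Without the contact condition the outer lobes of `K₁` can be undone
`τ`-equivariantly and those of `K₂` created afterwards.
-/

open scoped Manifold

noncomputable section

/-- ℝ³ with coordinates (x, y, z). -/
abbrev R3 : Type := ℝ × ℝ × ℝ

/-- 𝕊¹, the unit circle in ℝ². -/
abbrev S1 : Type := Metric.sphere (0 : EuclideanSpace ℝ (Fin 2)) 1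

/-- The involution τ(x,y,z) = (x, −y, −z). -/
def tau (p : R3) : R3 := (p.1, -p.2.1, -p.2.2)

/-- The contact form of the standard contact structure: α_p(v) = v_z − p_y · v_x. -/
def alphaForm (p v : R3) : ℝ := v.2.2 - p.2.1 * v.1

/-- The x-axis {(x,0,0) : x ∈ ℝ} ⊆ ℝ³, the fixed-point set of τ. -/
def xAxisSet : Set R3 := {p | p.2.1 = 0 ∧ p.2.2 = 0}

/-- A knot: a smooth injective immersion 𝕊¹ → ℝ³. -/
def IsKnot (K : S1 → R3) : Prop :=
  ContMDiff (𝓡 1) 𝓘(ℝ, R3) (⊤ : ℕ∞) K ∧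
  Function.Injective K ∧
  ∀ s, Function.Injective (mfderiv (𝓡 1) 𝓘(ℝ, R3) K s)

/-- A Legendrian knot: a knot all of whose tangent vectors lie in the contact planes. -/
def IsLegendrianKnot (K : S1 → R3) : Prop :=
  IsKnot K ∧
    ∀ s (v : EuclideanSpace ℝ (Fin 1)),
      alphaForm (K s) (mfderiv (𝓡 1) 𝓘(ℝ, R3) K s v) = 0

/-- A strongly invertible knot: τ maps the image onto itself, and the image meets the
x-axis in exactly two points. -/
def IsStronglyInvertibleKnot (K : S1 → R3) : Prop :=
  IsKnot K ∧ tau '' Set.range K = Set.range K ∧ (Set.range K ∩ xAxisSet).encard = 2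

/-- A smooth family of maps 𝕊¹ → ℝ³, i.e. a smooth map ℝ × 𝕊¹ → ℝ³. -/
def IsSmoothFamily (H : ℝ × S1 → R3) : Prop :=
  ContMDiff ((𝓘(ℝ, ℝ)).prod (𝓡 1)) 𝓘(ℝ, R3) (⊤ : ℕ∞) H

/-- The standard round circle θ ↦ (cos θ, sin θ, 0), parametrized by the unit circle. -/
def roundCircle : S1 → R3 :=
  fun s => ((s : EuclideanSpace ℝ (Fin 2)) 0, (s : EuclideanSpace ℝ (Fin 2)) 1, 0)

open Complex Filter Topology Set

/-! ### Curves parametrized by the angle -/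

namespace S1

instance : Fact (Module.finrank ℝ (EuclideanSpace ℝ (Fin 2)) = 1 + 1) := ⟨by simp⟩

/-- The inclusion of the circle in the complex plane. -/
def toComplex (s : S1) : ℂ := Complex.orthonormalBasisOneI.repr.symm s

/-- The parametrization of the circle by the angle. -/
def exp (θ : ℝ) : S1 := ⟨Complex.orthonormalBasisOneI.repr (cexp (θ * I)), by simp⟩

/-- The angle of a point of the circle, in `(θ - π, θ + π]`: a section of `S1.exp` that is
continuous near `S1.exp θ`. -/
def angleNear (θ : ℝ) (s : S1) : ℝ := θ + arg (toComplex s * cexp (-(θ * I)))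

/-- The velocity of the angular parametrization of the circle. -/
def tangent (θ : ℝ) : TangentSpace (𝓡 1) (exp θ) := mfderiv 𝓘(ℝ, ℝ) (𝓡 1) exp θ (1 : ℝ)

lemma toComplex_re (s : S1) : (toComplex s).re = (s : EuclideanSpace ℝ (Fin 2)) 0 := by
  simp [toComplex]

lemma toComplex_im (s : S1) : (toComplex s).im = (s : EuclideanSpace ℝ (Fin 2)) 1 := by
  simp [toComplex]

@[simp]
lemma norm_toComplex (s : S1) : ‖toComplex s‖ = 1 :=
  (LinearIsometryEquiv.norm_map _ _).trans (norm_eq_of_mem_sphere s)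

lemma toComplex_injective : Function.Injective toComplex :=
  Complex.orthonormalBasisOneI.repr.symm.injective.comp Subtype.val_injective

@[simp]
lemma toComplex_exp (θ : ℝ) : toComplex (exp θ) = cexp (θ * I) := by
  simp [toComplex, exp]

lemma contMDiff_toComplex : ContMDiff (𝓡 1) 𝓘(ℝ, ℂ) (⊤ : ℕ∞) toComplex :=
  Complex.orthonormalBasisOneI.repr.symm.contDiff.contMDiff.comp (contMDiff_coe_sphere (n := 1))

lemma continuous_toComplex : Continuous toComplex := contMDiff_toComplex.continuous

lemma contMDiff_exp : ContMDiff 𝓘(ℝ, ℝ) (𝓡 1) (⊤ : ℕ∞) exp := by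
  refine ContMDiff.codRestrict_sphere (n := 1) ?_ _
  have h : ContDiff ℝ (⊤ : ℕ∞) fun θ : ℝ => cexp (θ * I) :=
    (Complex.ofRealCLM.contDiff.mul contDiff_const).cexp
  exact (Complex.orthonormalBasisOneI.repr.contDiff.comp h).contMDiff

lemma continuous_exp : Continuous exp := contMDiff_exp.continuous

lemma exp_eq_exp_iff {θ η : ℝ} : exp θ = exp η ↔ ∃ n : ℤ, θ = η + n * (2 * Real.pi) := by
  rw [← toComplex_injective.eq_iff, toComplex_exp, toComplex_exp, Complex.exp_eq_exp_iff_exists_int]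
  refine exists_congr fun n => ?_
  rw [← ofReal_inj, ← mul_left_inj' I_ne_zero (a := (θ : ℂ))]
  push_cast
  rw [add_mul, mul_assoc (n : ℂ)]

lemma periodic_exp : Function.Periodic exp (2 * Real.pi) := fun θ =>
  exp_eq_exp_iff.2 ⟨1, by simp⟩

lemma exp_angleNear (θ : ℝ) (s : S1) : exp (angleNear θ s) = s := by
  apply toComplex_injective
  have h := norm_mul_exp_arg_mul_I (toComplex s * cexp (-(θ * I)))
  have hn : ‖toComplex s * cexp (-(θ * I))‖ = 1 := by
    rw [norm_mul, norm_toComplex, ← neg_mul, ← ofReal_neg, norm_exp_ofReal_mul_I, one_mul]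
  rw [hn, ofReal_one, one_mul] at h
  rw [toComplex_exp, angleNear, ofReal_add, add_mul, Complex.exp_add, h, mul_left_comm,
    ← Complex.exp_add, add_neg_cancel, Complex.exp_zero, mul_one]

lemma exp_surjective : Function.Surjective exp := fun s => ⟨_, exp_angleNear 0 s⟩

lemma exists_toComplex_eq {z : ℂ} (hz : ‖z‖ = 1) : ∃ s, toComplex s = z :=
  ⟨exp (arg z), by simpa [hz] using norm_mul_exp_arg_mul_I z⟩

lemma tendsto_angleNear (θ : ℝ) : Tendsto (angleNear θ) (𝓝 (exp θ)) (𝓝 θ) := by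
  have h1 : toComplex (exp θ) * cexp (-(θ * I)) = 1 := by
    rw [toComplex_exp, ← Complex.exp_add, add_neg_cancel, Complex.exp_zero]
  have hc : ContinuousAt (angleNear θ) (exp θ) := by
    refine continuousAt_const.add (ContinuousAt.comp (g := arg) ?_ ?_)
    · rw [h1]; exact continuousAt_arg one_mem_slitPlane
    · exact (continuous_toComplex.mul continuous_const).continuousAt
  simpa only [ContinuousAt, angleNear, h1, arg_one, add_zero] using hc

section Derivatives

variable {F : Type*} [NormedAddCommGroup F] [NormedSpace ℝ F]

lemma hasDerivAt_comp_exp {f : S1 → F} (θ : ℝ)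
    (hf : MDifferentiableAt (𝓡 1) 𝓘(ℝ, F) f (exp θ)) :
    HasDerivAt (fun u => f (exp u)) (mfderiv (𝓡 1) 𝓘(ℝ, F) f (exp θ) (tangent θ)) θ := by
  have he : MDifferentiableAt 𝓘(ℝ, ℝ) (𝓡 1) exp θ := (contMDiff_exp θ).mdifferentiableAt (by simp)
  have h : HasFDerivAt (fun u => f (exp u)) ((mfderiv (𝓡 1) 𝓘(ℝ, F) f (exp θ) ∘L
      mfderiv 𝓘(ℝ, ℝ) (𝓡 1) exp θ : ℝ →L[ℝ] F)) θ :=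
    (hf.hasMFDerivAt.comp θ he.hasMFDerivAt).hasFDerivAt
  exact h.hasDerivAt

lemma hasDerivAt_cexp_ofReal_mul_I (θ : ℝ) :
    HasDerivAt (fun u : ℝ => cexp (u * I)) (cexp (θ * I) * I) θ := by
  simpa using ((hasDerivAt_id (θ : ℂ)).mul_const I).cexp.comp_ofReal

lemma tangent_ne_zero (θ : ℝ) : tangent θ ≠ 0 := by
  intro h
  have hd := hasDerivAt_comp_exp θ ((contMDiff_toComplex (exp θ)).mdifferentiableAt (by simp))
  simp only [toComplex_exp] at hd
  have h0 : cexp (θ * I) * I = 0 :=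
    ((hasDerivAt_cexp_ofReal_mul_I θ).unique hd).trans ((congrArg _ h).trans (map_zero _))
  exact mul_ne_zero (Complex.exp_ne_zero _) I_ne_zero h0

lemma exists_smul_tangent_eq (θ : ℝ) (v : TangentSpace (𝓡 1) (exp θ)) :
    ∃ c : ℝ, c • tangent θ = v :=
  exists_smul_eq_of_finrank_eq_one finrank_euclideanSpace_fin (tangent_ne_zero θ) v

end Derivatives

end S1

/-- The velocity of a closed curve parametrized by the angle. -/
def velocity (K : S1 → R3) (θ : ℝ) : R3 := deriv (fun u => K (S1.exp u)) θ

lemma velocity_eq_mfderiv {K : S1 → R3} (hK : ContMDiff (𝓡 1) 𝓘(ℝ, R3) (⊤ : ℕ∞) K) (θ : ℝ) :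
    velocity K θ = mfderiv (𝓡 1) 𝓘(ℝ, R3) K (S1.exp θ) (S1.tangent θ) :=
  (S1.hasDerivAt_comp_exp θ ((hK _).mdifferentiableAt (by simp))).deriv

lemma hasDerivAt_velocity {K : S1 → R3} (hK : ContMDiff (𝓡 1) 𝓘(ℝ, R3) (⊤ : ℕ∞) K) (θ : ℝ) :
    HasDerivAt (fun u => K (S1.exp u)) (velocity K θ) θ :=
  velocity_eq_mfderiv hK θ ▸ S1.hasDerivAt_comp_exp θ ((hK _).mdifferentiableAt (by simp))

lemma mfderiv_smul_tangent {K : S1 → R3} (hK : ContMDiff (𝓡 1) 𝓘(ℝ, R3) (⊤ : ℕ∞) K) (c θ : ℝ) :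
    mfderiv (𝓡 1) 𝓘(ℝ, R3) K (S1.exp θ) (c • S1.tangent θ) = c • velocity K θ :=
  (map_smul _ _ _).trans (congrArg (c • ·) (velocity_eq_mfderiv hK θ).symm)

lemma isKnot_iff_velocity_ne_zero {K : S1 → R3} :
    IsKnot K ↔ ContMDiff (𝓡 1) 𝓘(ℝ, R3) (⊤ : ℕ∞) K ∧ Function.Injective K ∧
      ∀ θ, velocity K θ ≠ 0 := by
  refine and_congr_right fun hK => and_congr_right fun _ => ⟨fun h θ h0 => ?_, fun h s => ?_⟩
  · rw [velocity_eq_mfderiv hK] at h0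
    exact S1.tangent_ne_zero θ (h _ (h0.trans (map_zero _).symm))
  · obtain ⟨θ, rfl⟩ := S1.exp_surjective s
    refine (injective_iff_map_eq_zero _).2 fun v hv => ?_
    obtain ⟨c, rfl⟩ := S1.exists_smul_tangent_eq θ v
    rw [mfderiv_smul_tangent hK] at hv
    simp [(smul_eq_zero.1 hv).resolve_right (h θ)]

lemma isLegendrianKnot_iff_velocity {K : S1 → R3} :
    IsLegendrianKnot K ↔ IsKnot K ∧ ∀ θ, alphaForm (K (S1.exp θ)) (velocity K θ) = 0 := by
  refine and_congr_right fun hK => ⟨fun h θ => ?_, fun h s v => ?_⟩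
  · rw [velocity_eq_mfderiv hK.1]
    exact h _ _
  · obtain ⟨θ, rfl⟩ := S1.exp_surjective s
    obtain ⟨c, rfl⟩ := S1.exists_smul_tangent_eq θ v
    have hc := h θ
    rw [mfderiv_smul_tangent hK.1]
    simp only [alphaForm, Prod.smul_fst, Prod.smul_snd, smul_eq_mul] at hc ⊢
    linear_combination c * hc

lemma velocity_periodic (K : S1 → R3) : Function.Periodic (velocity K) (2 * Real.pi) := fun θ => by
  rw [velocity, ← deriv_comp_add_const]
  simp only [S1.periodic_exp _, velocity]

lemma velocity_congr (K : S1 → R3) {θ η : ℝ} (h : S1.exp θ = S1.exp η) :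
    velocity K θ = velocity K η := by
  obtain ⟨n, rfl⟩ := S1.exp_eq_exp_iff.1 h
  exact (velocity_periodic K).int_mul n η

lemma isKnot_of_leftInverse {K : S1 → R3} (hK : ContMDiff (𝓡 1) 𝓘(ℝ, R3) (⊤ : ℕ∞) K)
    {L : R3 → ℂ} (hL : Differentiable ℝ L) {c : ℂ} (hc : c ≠ 0)
    (h : ∀ s, L (K s) = c * S1.toComplex s) : IsKnot K := by
  refine isKnot_iff_velocity_ne_zero.2 ⟨hK, fun s s' hs => ?_, fun θ h0 => ?_⟩
  · exact S1.toComplex_injective (mul_left_cancel₀ hc (by rw [← h, hs, h]))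
  · have hd := ((hL _).hasFDerivAt.comp_hasDerivAt θ (hasDerivAt_velocity hK θ)).unique
      (((S1.hasDerivAt_cexp_ofReal_mul_I θ).const_mul c).congr_of_eventuallyEq
        (.of_forall fun u => by simp [h]))
    rw [h0, map_zero] at hd
    exact mul_ne_zero hc (mul_ne_zero (Complex.exp_ne_zero _) I_ne_zero) hd.symm

lemma isSmoothFamily_of_contDiff {E : Type*} [NormedAddCommGroup E] [NormedSpace ℝ E]
    {f : ℝ × E → R3} (hf : ContDiff ℝ (⊤ : ℕ∞) f) {g : S1 → E}
    (hg : ContMDiff (𝓡 1) 𝓘(ℝ, E) (⊤ : ℕ∞) g) : IsSmoothFamily fun q => f (q.1, g q.2) :=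
  hf.contMDiff.comp (contMDiff_fst.prodMk_space (hg.comp contMDiff_snd))

namespace IsSmoothFamily

variable {H : ℝ × S1 → R3}

lemma slice (hH : IsSmoothFamily H) (t : ℝ) :
    ContMDiff (𝓡 1) 𝓘(ℝ, R3) (⊤ : ℕ∞) fun s => H (t, s) :=
  hH.comp (contMDiff_const.prodMk contMDiff_id)

lemma contDiff_exp (hH : IsSmoothFamily H) :
    ContDiff ℝ (⊤ : ℕ∞) fun p : ℝ × ℝ => H (p.1, S1.exp p.2) := by
  rw [← contMDiff_iff_contDiff]
  exact hH.comp (contDiff_fst.contMDiff.prodMk (S1.contMDiff_exp.comp contDiff_snd.contMDiff))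

lemma velocity_eq_fderiv (hH : IsSmoothFamily H) (t θ : ℝ) :
    velocity (fun s => H (t, s)) θ =
      fderiv ℝ (fun p : ℝ × ℝ => H (p.1, S1.exp p.2)) (t, θ) (0, 1) := by
  have hd : HasDerivAt (fun u : ℝ => (t, u)) (0, 1) θ :=
    (hasDerivAt_const θ t).prodMk (hasDerivAt_id θ)
  have hF := (hH.contDiff_exp.differentiable (by simp) (t, θ)).hasFDerivAt
  exact (hF.comp_hasDerivAt θ hd).deriv

lemma continuous_velocity (hH : IsSmoothFamily H) :
    Continuous fun p : ℝ × ℝ => velocity (fun s => H (p.1, s)) p.2 := by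
  simp only [hH.velocity_eq_fderiv]
  exact (hH.contDiff_exp.continuous_fderiv (by simp)).clm_apply continuous_const

end IsSmoothFamily

lemma eventually_injective_of_hasStrictFDerivAt {E G : Type*} [NormedAddCommGroup E]
    [NormedSpace ℝ E] [NormedAddCommGroup G] [NormedSpace ℝ G] {f : E × ℝ → G}
    {f' : E × ℝ →L[ℝ] G} {a : E} {b : ℝ} (hf : HasStrictFDerivAt f f' (a, b))
    (hf' : f' (0, 1) ≠ 0) :
    ∀ᶠ q : E × ℝ × ℝ in 𝓝 (a, b, b), f (q.1, q.2.1) = f (q.1, q.2.2) → q.2.1 = q.2.2 := by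
  have hlim : Tendsto (fun q : E × ℝ × ℝ => ((q.1, q.2.1), (q.1, q.2.2))) (𝓝 (a, b, b))
      (𝓝 ((a, b), (a, b))) := Continuous.tendsto' (by fun_prop) _ _ rfl
  filter_upwards [hlim.eventually (hf.isLittleO.def (half_pos (norm_pos_iff.2 hf')))]
    with ⟨x, u, v⟩ hq huv
  have huv' : f (x, u) = f (x, v) := huv
  have hsub : ((x, u) : E × ℝ) - (x, v) = (u - v) • (0, 1) := by simp
  have hnorm : ‖((0, 1) : E × ℝ)‖ = 1 := by simp
  simp only [huv', sub_self, hsub, map_smul, zero_sub, norm_neg, norm_smul, hnorm, mul_one] at hq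
  by_contra hne
  have hpos : 0 < ‖u - v‖ := norm_pos_iff.2 (sub_ne_zero.2 hne)
  nlinarith [mul_pos hpos (norm_pos_iff.2 hf')]

lemma IsSmoothFamily.eventually_injective {H : ℝ × S1 → R3} (hH : IsSmoothFamily H)
    (ℓ : R3 →L[ℝ] ℝ) {t θ : ℝ} (h : ℓ (velocity (fun s => H (t, s)) θ) ≠ 0) :
    ∀ᶠ q : ℝ × ℝ × ℝ in 𝓝 (t, θ, θ),
      ℓ (H (q.1, S1.exp q.2.1)) = ℓ (H (q.1, S1.exp q.2.2)) → q.2.1 = q.2.2 := by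
  have hd := (hH.contDiff_exp.contDiffAt (x := (t, θ))).hasStrictFDerivAt (by simp)
  refine eventually_injective_of_hasStrictFDerivAt (ℓ.hasStrictFDerivAt.comp _ hd) ?_
  rwa [ContinuousLinearMap.comp_apply, ← hH.velocity_eq_fderiv]

/-! ### Intersections with the axis -/

lemma tau_eq_self_iff {p : R3} : tau p = p ↔ p ∈ xAxisSet := by
  simp [tau, xAxisSet, Prod.ext_iff, neg_eq_self]

lemma isClosed_xAxisSet : IsClosed xAxisSet :=
  (isClosed_eq (by fun_prop) continuous_const).inter (isClosed_eq (by fun_prop) continuous_const)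

lemma eq_of_mem_xAxisSet {p q : R3} (hp : p ∈ xAxisSet) (hq : q ∈ xAxisSet) (h : p.1 = q.1) :
    p = q :=
  Prod.ext h (Prod.ext (hp.1.trans hq.1.symm) (hp.2.trans hq.2.symm))

namespace IsStronglyInvertibleKnot

variable {K : S1 → R3}

lemma exists_continuous_lift_tau (hK : IsStronglyInvertibleKnot K) :
    ∃ ι : S1 → S1, Continuous ι ∧ ∀ s, K (ι s) = tau (K s) := by
  have hmem : ∀ s, tau (K s) ∈ range K := fun s => hK.2.1 ▸ mem_image_of_mem _ (mem_range_self s)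
  choose ι hι using hmem
  have hcont : Continuous K := hK.1.1.continuous
  have hemb := (hcont.isClosedEmbedding hK.1.2.1).isEmbedding
  refine ⟨ι, hemb.continuous_iff.2 ?_, hι⟩
  simp only [Function.comp_def, hι, tau]
  fun_prop

lemma frequently_notMem_xAxisSet (hK : IsStronglyInvertibleKnot K) (θ : ℝ) :
    ∃ᶠ u in 𝓝 θ, K (S1.exp u) ∉ xAxisSet := by
  intro h
  simp only [not_not] at h
  have hfin : ((range K ∩ xAxisSet) \ {K (S1.exp θ)}).Finite :=
    (finite_of_encard_eq_coe (k := 2) hK.2.2).sdiff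
  have hconst : (fun u => K (S1.exp u)) =ᶠ[𝓝 θ] fun _ => K (S1.exp θ) := by
    have hcont : Continuous fun u => K (S1.exp u) := hK.1.1.continuous.comp S1.continuous_exp
    filter_upwards [h, hcont.continuousAt.eventually (hfin.isClosed.isOpen_compl.mem_nhds
      fun hθ => hθ.2 rfl)] with u hu hu'
    by_contra hne
    exact hu' ⟨⟨mem_range_self _, hu⟩, hne⟩
  exact (isKnot_iff_velocity_ne_zero.1 hK.1).2.2 θ (hconst.deriv_eq.trans (deriv_const _ _))

/-- If the velocity were horizontal it would be a multiple of `∂/∂x`, so `x` would be an injective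
`τ`-invariant function on a `τ`-invariant arc, which `τ` would therefore fix. -/
lemma velocity_snd_fst_ne_zero (hK : IsStronglyInvertibleKnot K) (hL : IsLegendrianKnot K)
    {θ : ℝ} (hθ : K (S1.exp θ) ∈ xAxisSet) : (velocity K θ).2.1 ≠ 0 := by
  intro hy
  have hz : (velocity K θ).2.2 = 0 := by
    simpa [alphaForm, hθ.1] using (isLegendrianKnot_iff_velocity.1 hL).2 θ
  have hx : (velocity K θ).1 ≠ 0 := fun hx =>
    (isKnot_iff_velocity_ne_zero.1 hK.1).2.2 θ (Prod.ext hx (Prod.ext hy hz))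
  obtain ⟨ι, hιc, hι⟩ := hK.exists_continuous_lift_tau
  have hfix : ι (S1.exp θ) = S1.exp θ := hK.1.2.1 (by rw [hι, tau_eq_self_iff.2 hθ])
  have hlim : Tendsto (fun u => S1.angleNear θ (ι (S1.exp u))) (𝓝 θ) (𝓝 θ) :=
    (S1.tendsto_angleNear θ).comp ((hιc.comp S1.continuous_exp).tendsto' _ _ hfix)
  have hconst : IsSmoothFamily fun p : ℝ × S1 => K p.2 := hK.1.1.comp contMDiff_snd
  have hinj := hconst.eventually_injective (.fst ℝ ℝ (ℝ × ℝ)) (t := 0) hx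
  refine hK.frequently_notMem_xAxisSet θ ?_
  filter_upwards [((tendsto_const_nhds (x := (0 : ℝ))).prodMk_nhds
    (hlim.prodMk_nhds tendsto_id)).eventually hinj] with u hu
  have hval : K (S1.exp (S1.angleNear θ (ι (S1.exp u)))) = tau (K (S1.exp u)) := by
    rw [S1.exp_angleNear, hι]
  rw [hu (congrArg Prod.fst hval :)] at hval
  exact not_not.2 (tau_eq_self_iff.1 hval.symm)

end IsStronglyInvertibleKnot

/-- The angles `θ` and `η` are mapped to the left and to the right intersection point of a curve
with the `x`-axis. -/
def IsAxisPair (K : S1 → R3) (θ η : ℝ) : Prop :=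
  K (S1.exp θ) ∈ xAxisSet ∧ K (S1.exp η) ∈ xAxisSet ∧ (K (S1.exp θ)).1 < (K (S1.exp η)).1

namespace IsStronglyInvertibleKnot

variable {K : S1 → R3}

lemma exists_isAxisPair (hK : IsStronglyInvertibleKnot K) :
    ∃ θ ∈ Icc 0 (2 * Real.pi), ∃ η ∈ Icc 0 (2 * Real.pi), IsAxisPair K θ η := by
  have hper : Function.Periodic (fun θ => K (S1.exp θ)) (2 * Real.pi) := fun θ => by
    simp only [S1.periodic_exp θ]
  have hangle : ∀ p ∈ range K, ∃ θ ∈ Icc 0 (2 * Real.pi), p = K (S1.exp θ) := by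
    rintro _ ⟨s, rfl⟩
    obtain ⟨u, rfl⟩ := S1.exp_surjective s
    obtain ⟨θ, hθ, h⟩ := hper.exists_mem_Ico₀ Real.two_pi_pos u
    exact ⟨θ, Ico_subset_Icc_self hθ, h⟩
  obtain ⟨p, q, hpq, hset⟩ := encard_eq_two.1 hK.2.2
  obtain ⟨hpr, hp⟩ : p ∈ range K ∩ xAxisSet := by simp [hset]
  obtain ⟨hqr, hq⟩ : q ∈ range K ∩ xAxisSet := by simp [hset]
  obtain ⟨θ, hθ, rfl⟩ := hangle p hpr
  obtain ⟨η, hη, rfl⟩ := hangle q hqr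
  rcases lt_or_gt_of_ne fun h => hpq (eq_of_mem_xAxisSet hp hq h) with h | h
  · exact ⟨θ, hθ, η, hη, hp, hq, h⟩
  · exact ⟨η, hη, θ, hθ, hq, hp, h⟩

lemma exp_eq_of_isAxisPair (hK : IsStronglyInvertibleKnot K) {θ η θ' η' : ℝ}
    (h : IsAxisPair K θ η) (h' : IsAxisPair K θ' η') : S1.exp θ = S1.exp θ' := by
  obtain ⟨p, q, -, hset⟩ := encard_eq_two.1 hK.2.2
  have hmem : ∀ {u}, K (S1.exp u) ∈ xAxisSet → K (S1.exp u) = p ∨ K (S1.exp u) = q := fun hu =>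
    (hset ▸ ⟨mem_range_self _, hu⟩ : _ ∈ ({p, q} : Set R3))
  obtain ⟨hθ, hη, hlt⟩ := h
  obtain ⟨hθ', hη', hlt'⟩ := h'
  apply hK.1.2.1
  rcases hmem hθ with e | e <;> rcases hmem hη with e₁ | e₁ <;> rcases hmem hθ' with e₂ | e₂ <;>
    rcases hmem hη' with e₃ | e₃ <;> rw [e, e₁] at hlt <;> rw [e₂, e₃] at hlt' <;>
    first | exact e.trans e₂.symm | (exfalso; linarith)

end IsStronglyInvertibleKnot

section AxisPairs

variable {H : ℝ × S1 → R3}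

lemma eventually_not_isAxisPair (hH : IsSmoothFamily H) {t₀ θ η : ℝ}
    (hS : IsStronglyInvertibleKnot fun s => H (t₀, s)) (hL : IsLegendrianKnot fun s => H (t₀, s))
    (hθ : H (t₀, S1.exp θ) ∈ xAxisSet) (hη : S1.exp η = S1.exp θ) :
    ∀ᶠ z : ℝ × ℝ × ℝ in 𝓝 (t₀, θ, η), ¬ IsAxisPair (fun s => H (z.1, s)) z.2.1 z.2.2 := by
  obtain ⟨n, rfl⟩ := S1.exp_eq_exp_iff.1 hη
  have hshift : Tendsto (fun z : ℝ × ℝ × ℝ => (z.1, z.2.1, z.2.2 - n * (2 * Real.pi)))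
      (𝓝 (t₀, θ, θ + n * (2 * Real.pi))) (𝓝 (t₀, θ, θ)) :=
    Continuous.tendsto' (by fun_prop) _ _ (by simp)
  have hinj := hH.eventually_injective (.comp (.fst ℝ ℝ ℝ) (.snd ℝ ℝ (ℝ × ℝ)))
    (hS.velocity_snd_fst_ne_zero hL hθ)
  filter_upwards [hshift.eventually hinj] with z hz hpair
  have hexp : S1.exp (z.2.2 - n * (2 * Real.pi)) = S1.exp z.2.2 :=
    S1.exp_eq_exp_iff.2 ⟨-n, by push_cast; ring⟩
  have hzθ : z.2.1 = z.2.2 - n * (2 * Real.pi) :=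
    hz (by simpa [hexp] using hpair.1.1.trans hpair.2.1.1.symm)
  exact hpair.2.2.ne (by rw [hzθ, hexp])

lemma eventually_slope_mul_pos (hH : IsSmoothFamily H) {t₀ θ₀ η₀ : ℝ}
    (hS : IsStronglyInvertibleKnot fun s => H (t₀, s)) (hL : IsLegendrianKnot fun s => H (t₀, s))
    (h₀ : IsAxisPair (fun s => H (t₀, s)) θ₀ η₀) :
    ∀ᶠ t in 𝓝 t₀, ∀ p ∈ Icc 0 (2 * Real.pi) ×ˢ Icc 0 (2 * Real.pi),
      IsAxisPair (fun s => H (t, s)) p.1 p.2 →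
        0 < (velocity (fun s => H (t₀, s)) θ₀).2.1 * (velocity (fun s => H (t, s)) p.1).2.1 := by
  refine (isCompact_Icc.prod isCompact_Icc).eventually_forall_of_forall_eventually ?_
  rintro ⟨θ, η⟩ -
  by_contra hfreq
  simp only [not_eventually, Classical.not_imp, not_lt] at hfreq
  have hcθ : Continuous fun z : ℝ × ℝ × ℝ => (z.1, z.2.1) := by fun_prop
  have hcη : Continuous fun z : ℝ × ℝ × ℝ => (z.1, z.2.2) := by fun_prop
  have hFθ := hH.contDiff_exp.continuous.comp hcθ
  have hFη := hH.contDiff_exp.continuous.comp hcη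
  have hθ : H (t₀, S1.exp θ) ∈ xAxisSet :=
    (isClosed_xAxisSet.preimage hFθ).mem_of_frequently_of_tendsto
      (hfreq.mono fun _ hz => hz.1.1) tendsto_id
  have hη : H (t₀, S1.exp η) ∈ xAxisSet :=
    (isClosed_xAxisSet.preimage hFη).mem_of_frequently_of_tendsto
      (hfreq.mono fun _ hz => hz.1.2.1) tendsto_id
  have hle : (H (t₀, S1.exp θ)).1 ≤ (H (t₀, S1.exp η)).1 :=
    (isClosed_le hFθ.fst hFη.fst).mem_of_frequently_of_tendsto
      (hfreq.mono fun _ hz => hz.1.2.2.le) tendsto_id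
  have hslope : (velocity (fun s => H (t₀, s)) θ₀).2.1 *
      (velocity (fun s => H (t₀, s)) θ).2.1 ≤ 0 :=
    (isClosed_le (continuous_const.mul (hH.continuous_velocity.comp hcθ).snd.fst)
      continuous_const).mem_of_frequently_of_tendsto (hfreq.mono fun _ hz => hz.2) tendsto_id
  rcases hle.lt_or_eq with hlt | heq
  · rw [velocity_congr _ (hS.exp_eq_of_isAxisPair h₀ ⟨hθ, hη, hlt⟩)] at hslope
    exact hslope.not_gt (mul_self_pos.2 (hS.velocity_snd_fst_ne_zero hL hθ))
  · have hexp := hS.1.2.1 (eq_of_mem_xAxisSet hθ hη heq)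
    exact (hfreq.mono fun _ hz => hz.1) (eventually_not_isAxisPair hH hS hL hθ hexp.symm)

/-- The velocities at the intersections with the `x`-axis never become horizontal and the two
intersections never collide, so the direction of the passage through the left one is invariant. -/
theorem slope_mul_pos_of_isAxisPair (hH : IsSmoothFamily H)
    (hS : ∀ t ∈ Icc (0 : ℝ) 1, IsStronglyInvertibleKnot fun s => H (t, s))
    (hL : ∀ t ∈ Icc (0 : ℝ) 1, IsLegendrianKnot fun s => H (t, s))
    {p p' : ℝ × ℝ} (hp : p ∈ Icc 0 (2 * Real.pi) ×ˢ Icc 0 (2 * Real.pi))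
    (hp' : p' ∈ Icc 0 (2 * Real.pi) ×ˢ Icc 0 (2 * Real.pi))
    (h : IsAxisPair (fun s => H (0, s)) p.1 p.2) (h' : IsAxisPair (fun s => H (1, s)) p'.1 p'.2) :
    0 < (velocity (fun s => H (0, s)) p.1).2.1 * (velocity (fun s => H (1, s)) p'.1).2.1 := by
  have hmul : ∀ {a b c : ℝ}, 0 < c * a → 0 < c * b → 0 < a * b := fun {a b c} ha hb =>
    pos_of_mul_pos_right (a := c ^ 2) (by linarith [mul_pos ha hb]) (sq_nonneg c)
  let D : Set (ℝ × ℝ) := Icc 0 (2 * Real.pi) ×ˢ Icc 0 (2 * Real.pi)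
  let P (t t' : ℝ) : Prop := ∀ p ∈ D, ∀ p' ∈ D, IsAxisPair (fun s => H (t, s)) p.1 p.2 →
    IsAxisPair (fun s => H (t', s)) p'.1 p'.2 →
      0 < (velocity (fun s => H (t, s)) p.1).2.1 * (velocity (fun s => H (t', s)) p'.1).2.1
  have hlocal : ∀ t ∈ Icc (0 : ℝ) 1, ∀ᶠ t' in 𝓝[Icc 0 1] t, P t t' := by
    intro t ht
    obtain ⟨θ, -, η, -, hpair⟩ := (hS t ht).exists_isAxisPair
    have hev := eventually_slope_mul_pos hH (hS t ht) (hL t ht) hpair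
    filter_upwards [mem_nhdsWithin_of_mem_nhds hev] with t' ht' p hp p' hp' h h'
    exact hmul (hev.self_of_nhds p hp h) (ht' p' hp' h')
  have htrans : ∀ t t' t'', t ∈ Icc (0 : ℝ) 1 → t' ∈ Icc (0 : ℝ) 1 → t'' ∈ Icc (0 : ℝ) 1 →
      P t t' → P t' t'' → P t t'' := by
    intro t t' t'' _ ht' _ h₁ h₂ p hp p' hp' h h'
    obtain ⟨θ, hθ, η, hη, hpair⟩ := (hS t' ht').exists_isAxisPair
    exact hmul (mul_comm _ (velocity _ θ).2.1 ▸ h₁ p hp (θ, η) ⟨hθ, hη⟩ h hpair)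
      (h₂ (θ, η) ⟨hθ, hη⟩ p' hp' hpair h')
  refine isPreconnected_Icc.induction₂ P hlocal htrans (fun t t' _ _ h p hp p' hp' hpt hpt' => ?_)
    (left_mem_Icc.2 zero_le_one) (right_mem_Icc.2 zero_le_one) p hp p' hp' h h'
  rw [mul_comm]
  exact h p' hp' p hp hpt' hpt

end AxisPairs

/-! ### Winding numbers -/

/-- The closed planar curve `f`, parametrized by `[0, 2π]`, winds `n` times around the origin: it
has a continuous logarithm whose increment over the period is `2πin`. -/
def HasWindingNumber (f : ℝ → ℂ) (n : ℤ) : Prop :=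
  ∃ g : ℝ → ℂ, Continuous g ∧ (∀ θ, cexp (g θ) = f θ) ∧
    g (2 * Real.pi) = g 0 + n * (2 * Real.pi * I)

lemma hasWindingNumber_cexp_mul_I : HasWindingNumber (fun θ => cexp (θ * I)) 1 :=
  ⟨fun θ => θ * I, by fun_prop, fun _ => rfl, by simp⟩

/-- A curve avoiding the negative real axis has the principal branch of its logarithm. -/
lemma HasWindingNumber.of_mul_mem_slitPlane {f h : ℝ → ℂ} {n : ℤ} (hf : HasWindingNumber f n)
    (hh : Continuous h) (hper : h (2 * Real.pi) = h 0) {c : ℂ}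
    (hc : ∀ θ, c * f θ * h θ ∈ slitPlane) : HasWindingNumber h (-n) := by
  obtain ⟨g, hg, hgf, hgn⟩ := hf
  have hc0 : c ≠ 0 := left_ne_zero_of_mul (left_ne_zero_of_mul (slitPlane_ne_zero (hc 0)))
  have hfc : Continuous f := funext hgf ▸ hg.cexp
  refine ⟨fun θ => log (c * f θ * h θ) - log c - g θ,
    ((((continuous_const.mul hfc).mul hh).clog hc).sub continuous_const).sub hg, fun θ => ?_, ?_⟩
  · have hne : f θ ≠ 0 := hgf θ ▸ Complex.exp_ne_zero _
    rw [Complex.exp_sub, Complex.exp_sub, exp_log (slitPlane_ne_zero (hc θ)), exp_log hc0, hgf]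
    field_simp
  · have hfper : f (2 * Real.pi) = f 0 := by
      have hn := Complex.exp_int_mul_two_pi_mul_I n
      have hg2 := hgf (2 * Real.pi)
      rwa [hgn, Complex.exp_add, hn, mul_one, hgf, eq_comm] at hg2
    simp only [hper, hfper, hgn]
    push_cast
    ring

/-- Lift the homotopy through the covering map `exp`; the increments of the logarithms over the
period are locally constant in `t`. -/
lemma HasWindingNumber.of_homotopy {F : unitInterval × ℝ → ℂ} (hF : Continuous F)
    (hF0 : ∀ p, F p ≠ 0) (hper : ∀ t, F (t, 2 * Real.pi) = F (t, 0)) {n : ℤ}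
    (h : HasWindingNumber (fun θ => F (0, θ)) n) : HasWindingNumber (fun θ => F (1, θ)) n := by
  obtain ⟨g, hg, hgF, hgn⟩ := h
  let Φ : C(unitInterval × ℝ, {z : ℂ // z ≠ 0}) := ⟨fun p => ⟨F p, hF0 p⟩, by fun_prop⟩
  have hΦ : ∀ θ, Φ (0, θ) = ⟨cexp (g θ), Complex.exp_ne_zero _⟩ := fun θ => Subtype.ext (hgF θ).symm
  let G := isCoveringMap_exp.liftHomotopy Φ ⟨g, hg⟩ hΦ
  have hGF : ∀ p, cexp (G p) = F p := fun p =>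
    congrArg Subtype.val (congrFun (isCoveringMap_exp.liftHomotopy_lifts Φ ⟨g, hg⟩ hΦ) p)
  have hG0 : ∀ θ, G (0, θ) = g θ := isCoveringMap_exp.liftHomotopy_zero Φ ⟨g, hg⟩ hΦ
  have hincr : (fun t => G (t, 2 * Real.pi)) = fun t => G (t, 0) + n * (2 * Real.pi * I) := by
    refine isCoveringMap_exp.eq_of_comp_eq (by fun_prop) (by fun_prop)
      (funext fun t => Subtype.ext ?_) 0 (by simpa only [hG0] using hgn)
    simp [Complex.exp_add, hGF, hper, Complex.exp_int_mul_two_pi_mul_I]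
  exact ⟨fun θ => G (1, θ), by fun_prop, fun θ => hGF _, congrFun hincr 1⟩

lemma hasDerivAt_of_cexp_eq {f g : ℝ → ℂ} (hgf : ∀ u, cexp (g u) = f u) {f' : ℂ} {θ : ℝ}
    (hg : ContinuousAt g θ) (hf : HasDerivAt f f' θ) : HasDerivAt g (f' / f θ) θ := by
  have hne : f θ ≠ 0 := hgf θ ▸ Complex.exp_ne_zero _
  have hlog : HasDerivAt (fun u => g θ + log (f u / f θ)) (f' / f θ) θ := by
    have hone : f θ / f θ ∈ slitPlane := by simp [hne]
    simpa [hne] using ((hf.div_const (f θ)).clog_real hone).const_add (g θ)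
  have him : Tendsto (fun u => (g u - g θ).im) (𝓝 θ) (𝓝 0) := by
    have hc : ContinuousAt (fun u => (g u - g θ).im) θ :=
      continuous_im.continuousAt.comp (hg.sub continuousAt_const)
    simpa [ContinuousAt] using hc
  refine hlog.congr_of_eventuallyEq ?_
  filter_upwards [him.eventually (Ioo_mem_nhds (neg_lt_zero.2 Real.pi_pos) Real.pi_pos)] with u hu
  rw [← hgf, ← hgf, ← Complex.exp_sub, log_exp hu.1 hu.2.le, add_sub_cancel]

lemma HasWindingNumber.angularVelocity_pos {z : ℝ → ℂ} {n : ℤ} (hz : HasWindingNumber z n)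
    (hn : 0 < n) {q : ℝ → ℝ} (hq : ∀ θ, HasDerivAt z (q θ * I * z θ) θ)
    (hq0 : ∀ θ, q θ ≠ 0) (θ : ℝ) : 0 < q θ := by
  obtain ⟨g, hg, hgz, hgn⟩ := hz
  have hderiv : ∀ u, HasDerivAt (fun u => (g u).im) (q u) u := fun u => by
    have hne : z u ≠ 0 := hgz u ▸ Complex.exp_ne_zero _
    have hd := hasDerivAt_of_cexp_eq hgz hg.continuousAt (hq u)
    rw [mul_div_cancel_right₀ _ hne] at hd
    have him := imCLM.hasFDerivAt.comp_hasDerivAt u hd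
    rwa [imCLM_apply, mul_I_im, ofReal_re] at him
  have hsign := hasDerivWithinAt_forall_lt_or_forall_gt_of_forall_ne convex_univ
    (fun u _ => (hderiv u).hasDerivWithinAt) (m := 0) fun u _ => hq0 u
  refine (hsign.resolve_left fun hneg => ?_) θ (mem_univ θ)
  have hanti : StrictAnti fun u => (g u).im :=
    strictAnti_of_deriv_neg fun u => (hderiv u).deriv.symm ▸ hneg u (mem_univ u)
  have hlt : (g (2 * Real.pi)).im < (g 0).im := hanti Real.two_pi_pos
  have hincr : (g (2 * Real.pi)).im = (g 0).im + n * (2 * Real.pi) := by simp [hgn]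
  have hpos : (0 : ℝ) < n * (2 * Real.pi) := mul_pos (Int.cast_pos.2 hn) Real.two_pi_pos
  linarith

lemma exists_angularVelocity {z : ℝ → ℂ} (hz : ContDiff ℝ 1 z) (hnorm : ∀ θ, ‖z θ‖ = 1) :
    ∃ q : ℝ → ℝ, Continuous q ∧ ∀ θ, HasDerivAt z (q θ * I * z θ) θ := by
  have hne : ∀ θ, z θ ≠ 0 := fun θ => norm_ne_zero_iff.1 (by simp [hnorm])
  have hd : ∀ θ, HasDerivAt z (deriv z θ) θ := fun θ =>
    (hz.differentiable one_ne_zero θ).hasDerivAt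
  refine ⟨fun θ => (deriv z θ / z θ).im, Complex.continuous_im.comp
    (hz.continuous_deriv_one.div hz.continuous hne), fun θ => ?_⟩
  have hre : (deriv z θ / z θ).re = 0 := by
    have hsq := (hd θ).norm_sq
    simp only [hnorm, Complex.inner] at hsq
    have hinner := hsq.unique (hasDerivAt_const θ _)
    simp only [mul_re, conj_re, conj_im] at hinner
    rw [div_re, ← add_div, div_eq_zero_iff]
    left
    linarith
  have h : ((deriv z θ / z θ).im : ℂ) * I = deriv z θ / z θ :=
    Complex.ext (by simp [hre]) (by simp)
  rw [h, div_mul_cancel₀ _ (hne θ)]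
  exact hd θ

lemma forall_pos_or_forall_neg_of_continuous {X : Type*} [TopologicalSpace X]
    [PreconnectedSpace X] {q : X → ℝ} (hq : Continuous q) (hq0 : ∀ θ, q θ ≠ 0) :
    (∀ θ, 0 < q θ) ∨ ∀ θ, q θ < 0 := by
  by_contra! ⟨⟨θ, hθ⟩, η, hη⟩
  obtain ⟨u, hu⟩ := mem_range_of_exists_le_of_exists_ge hq ⟨θ, hθ⟩ ⟨η, hη⟩
  exact hq0 u hu

/-! ### Curled circles -/

/-- For `l = 0` or `m = 0`, an embedding of the unit circle of `ℂ` in `ℝ³`: a planar circle if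
`l = m = 0`, and a Legendrian curve over a planar curve with two curls if one of `l` and `m` is `1`.
The curls are on the `x`-axis for `l = 1` and on the `y`-axis for `m = 1`. -/
def curledCircle (l m : ℝ) (z : ℂ) : R3 :=
  (z.re * (1 - 4 * m ^ 2 * z.im ^ 2), z.im * (1 - 4 * l ^ 2 * z.re ^ 2),
    l * z.re * z.im * (1 - l ^ 2 * z.re ^ 2) - 3 * m ^ 3 * z.re * z.im ^ 3)

/-- A left inverse of `curledCircle l m` for `l = 0` or `m = 0`. -/
def uncurl (l m : ℝ) (p : R3) : ℂ :=
  ((1 + 4 * m ^ 2 * p.2.1 ^ 2) * p.1 - 16 / 3 * m * p.2.1 * p.2.2 : ℝ) +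
    ((1 - 4 / 3 * l ^ 2 * p.1 ^ 2) * p.2.1 + 16 / 3 * l * p.1 * p.2.2 : ℝ) * I

/-- The derivative of `curledCircle l m` at `z` in the direction `i z`. -/
def curledCircleTangent (l m : ℝ) (z : ℂ) : R3 :=
  (-z.im * (1 + 8 * m ^ 2 * z.re ^ 2 - 4 * m ^ 2 * z.im ^ 2),
    z.re * (1 - 4 * l ^ 2 * z.re ^ 2 + 8 * l ^ 2 * z.im ^ 2),
    l * z.re ^ 2 * (1 - l ^ 2 * z.re ^ 2) - l * z.im ^ 2 * (1 - 3 * l ^ 2 * z.re ^ 2)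
      + 3 * m ^ 3 * z.im ^ 2 * (z.im ^ 2 - 3 * z.re ^ 2))

/-- The knot `curledCircle l m`, parametrized by the circle with a phase shift `p`. -/
def curledKnot (l m p : ℝ) (s : S1) : R3 := curledCircle l m (cexp (p * I) * S1.toComplex s)

lemma sq_re_add_sq_im_of_norm_eq_one {z : ℂ} (hz : ‖z‖ = 1) : z.re ^ 2 + z.im ^ 2 = 1 := by
  rw [← sq_norm_sub_sq_re, hz, one_pow, add_sub_cancel]

lemma tau_curledCircle (l m : ℝ) (z : ℂ) :
    tau (curledCircle l m z) = curledCircle l m (starRingEnd ℂ z) := by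
  simp only [tau, curledCircle, conj_re, conj_im]
  ext <;> ring

lemma uncurl_curledCircle {l m : ℝ} (h : l = 0 ∨ m = 0) (z : ℂ) :
    uncurl l m (curledCircle l m z) = z := by
  rw [uncurl, Complex.ext_iff, ← mk_eq_add_mul_I]
  rcases h with rfl | rfl <;> constructor <;> simp only [curledCircle] <;> ring

lemma contDiff_uncurl (l m : ℝ) : ContDiff ℝ (⊤ : ℕ∞) (uncurl l m) := by
  have hre : ContDiff ℝ (⊤ : ℕ∞) fun p : R3 =>
      (1 + 4 * m ^ 2 * p.2.1 ^ 2) * p.1 - 16 / 3 * m * p.2.1 * p.2.2 := by fun_prop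
  have him : ContDiff ℝ (⊤ : ℕ∞) fun p : R3 =>
      (1 - 4 / 3 * l ^ 2 * p.1 ^ 2) * p.2.1 + 16 / 3 * l * p.1 * p.2.2 := by fun_prop
  exact (ofRealCLM.contDiff.comp hre).add ((ofRealCLM.contDiff.comp him).mul contDiff_const)

lemma curledCircle_mem_xAxisSet_iff {l m : ℝ} (h : l = 0 ∨ m = 0) {z : ℂ} :
    curledCircle l m z ∈ xAxisSet ↔ z.im = 0 := by
  refine ⟨fun hz => ?_, fun hz => by simp [curledCircle, xAxisSet, hz]⟩
  rw [← uncurl_curledCircle h z, uncurl, hz.1, hz.2]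
  simp

lemma hasDerivAt_curledCircle (l m : ℝ) {z : ℝ → ℂ} {q θ : ℝ}
    (hz : HasDerivAt z (q * I * z θ) θ) :
    HasDerivAt (fun u => curledCircle l m (z u)) (q • curledCircleTangent l m (z θ)) θ := by
  have ha : HasDerivAt (fun u => (z u).re) (-q * (z θ).im) θ := by
    simpa using! reCLM.hasFDerivAt.comp_hasDerivAt θ hz
  have hb : HasDerivAt (fun u => (z u).im) (q * (z θ).re) θ := by
    simpa using! imCLM.hasFDerivAt.comp_hasDerivAt θ hz
  have hx := ha.mul (((hb.pow 2).const_mul (4 * m ^ 2)).const_sub 1)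
  have hy := hb.mul (((ha.pow 2).const_mul (4 * l ^ 2)).const_sub 1)
  have hζ := (((ha.const_mul l).mul hb).mul (((ha.pow 2).const_mul (l ^ 2)).const_sub 1)).sub
    ((ha.const_mul (3 * m ^ 3)).mul (hb.pow 3))
  convert! hx.prodMk (hy.prodMk hζ) using 1
  simp only [curledCircleTangent, Prod.smul_mk, smul_eq_mul, Prod.mk.injEq]
  refine ⟨?_, ?_, ?_⟩ <;>
    simp only [Pi.pow_apply, Pi.mul_apply, Nat.cast_ofNat, Nat.add_one_sub_one, pow_one] <;> ring

lemma curledKnot_exp (l m p θ : ℝ) :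
    curledKnot l m p (S1.exp θ) = curledCircle l m (cexp ((p + θ : ℝ) * I)) := by
  rw [curledKnot, S1.toComplex_exp, ← Complex.exp_add, ofReal_add, add_mul]

lemma velocity_curledKnot (l m p θ : ℝ) :
    velocity (curledKnot l m p) θ = curledCircleTangent l m (cexp ((p + θ : ℝ) * I)) := by
  have hz : HasDerivAt (fun u => cexp ((p + u : ℝ) * I))
      ((1 : ℝ) * I * cexp ((p + θ : ℝ) * I)) θ := by
    rw [ofReal_one, one_mul, mul_comm]
    exact (S1.hasDerivAt_cexp_ofReal_mul_I (p + θ)).comp_const_add p θ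
  simp only [velocity, curledKnot_exp]
  rw [(hasDerivAt_curledCircle l m hz).deriv, one_smul]

lemma contDiff_curledCircle :
    ContDiff ℝ (⊤ : ℕ∞) fun q : ℝ × ℝ × ℂ => curledCircle q.1 q.2.1 q.2.2 := by
  have hre : ContDiff ℝ (⊤ : ℕ∞) fun q : ℝ × ℝ × ℂ => q.2.2.re :=
    reCLM.contDiff.comp (contDiff_snd.comp contDiff_snd)
  have him : ContDiff ℝ (⊤ : ℕ∞) fun q : ℝ × ℝ × ℂ => q.2.2.im :=
    imCLM.contDiff.comp (contDiff_snd.comp contDiff_snd)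
  unfold curledCircle
  fun_prop

lemma isSmoothFamily_curledKnot {l m p : ℝ → ℝ} (hl : ContDiff ℝ (⊤ : ℕ∞) l)
    (hm : ContDiff ℝ (⊤ : ℕ∞) m) (hp : ContDiff ℝ (⊤ : ℕ∞) p) :
    IsSmoothFamily fun q => curledKnot (l q.1) (m q.1) (p q.1) q.2 := by
  have h : ContDiff ℝ (⊤ : ℕ∞) fun q : ℝ × ℂ =>
      curledCircle (l q.1) (m q.1) (cexp (p q.1 * I) * q.2) :=
    contDiff_curledCircle.comp ((hl.comp contDiff_fst).prodMk ((hm.comp contDiff_fst).prodMk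
      (((ofRealCLM.contDiff.comp (hp.comp contDiff_fst)).mul contDiff_const).cexp.mul
        contDiff_snd)))
  exact isSmoothFamily_of_contDiff h S1.contMDiff_toComplex

lemma isKnot_curledKnot {l m : ℝ} (h : l = 0 ∨ m = 0) (p : ℝ) : IsKnot (curledKnot l m p) :=
  isKnot_of_leftInverse
    ((isSmoothFamily_curledKnot (l := fun _ => l) (m := fun _ => m) (p := fun _ => p)
      contDiff_const contDiff_const contDiff_const).slice 0)
    ((contDiff_uncurl l m).differentiable (by simp)) (Complex.exp_ne_zero _)
    fun _ => uncurl_curledCircle h _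

lemma range_curledKnot (l m p : ℝ) :
    range (curledKnot l m p) = curledCircle l m '' Metric.sphere 0 1 := by
  have hrot : range (fun s => cexp (p * I) * S1.toComplex s) = Metric.sphere 0 1 := by
    ext z
    rw [mem_sphere_zero_iff_norm]
    refine ⟨?_, fun hz => ?_⟩
    · rintro ⟨s, rfl⟩
      simp [norm_exp_ofReal_mul_I]
    · obtain ⟨s, hs⟩ := S1.exists_toComplex_eq (z := (cexp (p * I))⁻¹ * z)
        (by simp [hz, norm_exp_ofReal_mul_I])
      exact ⟨s, by simp only [hs, mul_inv_cancel_left₀ (Complex.exp_ne_zero _)]⟩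
  rw [← hrot, ← range_comp]
  rfl

lemma range_curledKnot_inter_xAxisSet {l m : ℝ} (h : l = 0 ∨ m = 0) (p : ℝ) :
    range (curledKnot l m p) ∩ xAxisSet = {(1, 0, 0), (-1, 0, 0)} := by
  have hone : ∀ c : ℝ, curledCircle l m c = (c, 0, 0) := fun c => by simp [curledCircle]
  rw [range_curledKnot]
  ext q
  constructor
  · rintro ⟨⟨z, hz, rfl⟩, hq⟩
    rw [curledCircle_mem_xAxisSet_iff h] at hq
    obtain ⟨c, rfl⟩ : ∃ c : ℝ, (c : ℂ) = z := ⟨z.re, Complex.ext rfl hq.symm⟩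
    have hc : |c| = 1 := by simpa using hz
    rw [hone]
    rcases eq_or_eq_neg_of_abs_eq hc with rfl | rfl
    · exact .inl rfl
    · exact .inr rfl
  · rintro (rfl | rfl)
    · exact ⟨⟨(1 : ℝ), by simp, hone 1⟩, rfl, rfl⟩
    · exact ⟨⟨(-1 : ℝ), by simp, hone (-1)⟩, rfl, rfl⟩

lemma isStronglyInvertibleKnot_curledKnot {l m : ℝ} (h : l = 0 ∨ m = 0) (p : ℝ) :
    IsStronglyInvertibleKnot (curledKnot l m p) := by
  refine ⟨isKnot_curledKnot h p, ?_, ?_⟩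
  · have hconj : starRingEnd ℂ '' Metric.sphere 0 1 = Metric.sphere 0 1 := by
      simpa only [map_zero] using! conjLIE.image_sphere 0 1
    rw [range_curledKnot, image_image]
    simp only [tau_curledCircle]
    rw [← image_image, hconj]
  · rw [range_curledKnot_inter_xAxisSet h]
    exact encard_pair fun h => absurd (congrArg Prod.fst h) (by norm_num)

lemma isLegendrianKnot_curledKnot_one_zero (p : ℝ) : IsLegendrianKnot (curledKnot 1 0 p) := by
  refine isLegendrianKnot_iff_velocity.2 ⟨isKnot_curledKnot (.inr rfl) p, fun θ => ?_⟩
  have hz := sq_re_add_sq_im_of_norm_eq_one (norm_exp_ofReal_mul_I (p + θ))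
  rw [curledKnot_exp, velocity_curledKnot]
  simp only [alphaForm, curledCircle, curledCircleTangent]
  linear_combination -(cexp ((p + θ : ℝ) * I)).re ^ 2 * hz

lemma curledKnot_zero_zero : curledKnot 0 0 0 = roundCircle := by
  funext s
  simp [curledKnot, curledCircle, roundCircle, S1.toComplex_re, S1.toComplex_im]

lemma exists_isKnot_isotopy_roundCircle {l m : ℝ} (h : l = 0 ∨ m = 0) (p : ℝ) :
    ∃ H : ℝ × S1 → R3, IsSmoothFamily H ∧ (∀ s, H (0, s) = curledKnot l m p s) ∧
      (∀ s, H (1, s) = roundCircle s) ∧ ∀ t ∈ Icc (0 : ℝ) 1, IsKnot fun s => H (t, s) := by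
  refine ⟨_, isSmoothFamily_curledKnot (l := fun t => (1 - t) * l) (m := fun t => (1 - t) * m)
      (p := fun t => (1 - t) * p) (by fun_prop) (by fun_prop) (by fun_prop), fun s => by simp,
    fun s => by simp [curledKnot_zero_zero], fun t _ => isKnot_curledKnot (l := (1 - t) * l)
      (m := (1 - t) * m) ?_ ((1 - t) * p)⟩
  rcases h with rfl | rfl <;> simp

/-- Undo the curls on the `x`-axis first, then create those on the `y`-axis. -/
lemma exists_isStronglyInvertibleKnot_isotopy (l m p : ℝ) :
    ∃ H : ℝ × S1 → R3, IsSmoothFamily H ∧ (∀ s, H (0, s) = curledKnot l 0 0 s) ∧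
      (∀ s, H (1, s) = curledKnot 0 m p s) ∧
      ∀ t ∈ Icc (0 : ℝ) 1, IsStronglyInvertibleKnot fun s => H (t, s) := by
  let σ := Real.smoothTransition
  have hσ : ContDiff ℝ (⊤ : ℕ∞) σ := Real.smoothTransition.contDiff
  have hσ0 : ∀ {t}, t ≤ 0 → σ t = 0 := Real.smoothTransition.zero_of_nonpos
  have hσ1 : ∀ {t}, 1 ≤ t → σ t = 1 := Real.smoothTransition.one_of_one_le
  refine ⟨_, isSmoothFamily_curledKnot (l := fun t => σ (1 - 2 * t) * l)
      (m := fun t => σ (2 * t - 1) * m) (p := fun t => σ (2 * t - 1) * p)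
      (by fun_prop) (by fun_prop) (by fun_prop),
    fun s => ?_, fun s => ?_, fun t _ => isStronglyInvertibleKnot_curledKnot
      (l := σ (1 - 2 * t) * l) (m := σ (2 * t - 1) * m) ?_ (σ (2 * t - 1) * p)⟩
  · simp only [hσ0 (t := 2 * 0 - 1) (by norm_num),
      hσ1 (t := 1 - 2 * 0) (by norm_num), one_mul, zero_mul]
  · simp only [hσ0 (t := 1 - 2 * 1) (by norm_num),
      hσ1 (t := 2 * 1 - 1) (by norm_num), one_mul, zero_mul]
  · rcases le_total t (1 / 2) with ht | ht
    · exact .inr (by rw [hσ0 (by linarith), zero_mul])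
    · exact .inl (by rw [hσ0 (by linarith), zero_mul])

lemma IsKnot.comp {K : S1 → R3} (hK : IsKnot K) {φ ψ : R3 → R3} (hφ : ContDiff ℝ (⊤ : ℕ∞) φ)
    (hψ : Differentiable ℝ ψ) (h : Function.LeftInverse ψ φ) : IsKnot fun s => φ (K s) := by
  rw [isKnot_iff_velocity_ne_zero] at hK
  have hsmooth : ContMDiff (𝓡 1) 𝓘(ℝ, R3) (⊤ : ℕ∞) fun s => φ (K s) := hφ.contMDiff.comp hK.1
  refine isKnot_iff_velocity_ne_zero.2 ⟨hsmooth, h.injective.comp hK.2.1, fun θ h0 => ?_⟩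
  have hd := ((hψ _).hasFDerivAt.comp_hasDerivAt θ (hasDerivAt_velocity hsmooth θ)).unique
    ((hasDerivAt_velocity hK.1 θ).congr_of_eventuallyEq (.of_forall fun u => h _))
  rw [h0, map_zero] at hd
  exact hK.2.2 θ hd.symm

/-! ### Legendrian isotopies by rotation -/

/-- The rotation of the `xy`-plane by the angle `p`, lifted to a diffeomorphism of `ℝ³` preserving
the contact form: `z` is corrected by a primitive of the difference of `y dx` and its pullback. -/
def contactRotation (p : ℝ) (q : R3) : R3 :=
  (Real.cos p * q.1 - Real.sin p * q.2.1, Real.sin p * q.1 + Real.cos p * q.2.1,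
    q.2.2 + Real.sin p * Real.cos p * (q.1 ^ 2 - q.2.1 ^ 2) / 2 - Real.sin p ^ 2 * q.1 * q.2.1)

lemma contactRotation_zero (q : R3) : contactRotation 0 q = q := by simp [contactRotation]

lemma contactRotation_neg_leftInverse (p : ℝ) :
    Function.LeftInverse (contactRotation (-p)) (contactRotation p) := fun q => by
  have h := Real.sin_sq_add_cos_sq p
  simp only [contactRotation, Real.cos_neg, Real.sin_neg]
  refine Prod.ext ?_ (Prod.ext ?_ ?_)
  · linear_combination q.1 * h
  · linear_combination q.2.1 * h
  · linear_combination (Real.sin p ^ 2 * q.1 * q.2.1 -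
      Real.sin p * Real.cos p * (q.1 ^ 2 - q.2.1 ^ 2) / 2) * h

lemma contDiff_contactRotation {E : Type*} [NormedAddCommGroup E] [NormedSpace ℝ E] {p : E → ℝ}
    {q : E → R3} (hp : ContDiff ℝ (⊤ : ℕ∞) p) (hq : ContDiff ℝ (⊤ : ℕ∞) q) :
    ContDiff ℝ (⊤ : ℕ∞) fun x => contactRotation (p x) (q x) := by
  unfold contactRotation
  fun_prop

lemma alphaForm_contactRotation (p : ℝ) {γ : ℝ → R3} {v w : R3} {θ : ℝ} (hγ : HasDerivAt γ v θ)
    (hw : HasDerivAt (fun u => contactRotation p (γ u)) w θ) :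
    alphaForm (contactRotation p (γ θ)) w = alphaForm (γ θ) v := by
  let f := ContinuousLinearMap.fst ℝ
  let s := ContinuousLinearMap.snd ℝ
  have hx : HasDerivAt (fun u => (γ u).1) v.1 θ := (f ℝ (ℝ × ℝ)).hasFDerivAt.comp_hasDerivAt θ hγ
  have hyz : HasDerivAt (fun u => (γ u).2) v.2 θ := (s ℝ (ℝ × ℝ)).hasFDerivAt.comp_hasDerivAt θ hγ
  have hy : HasDerivAt (fun u => (γ u).2.1) v.2.1 θ := (f ℝ ℝ).hasFDerivAt.comp_hasDerivAt θ hyz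
  have hz : HasDerivAt (fun u => (γ u).2.2) v.2.2 θ := (s ℝ ℝ).hasFDerivAt.comp_hasDerivAt θ hyz
  have hX := (hx.const_mul (Real.cos p)).sub (hy.const_mul (Real.sin p))
  have hY := (hx.const_mul (Real.sin p)).add (hy.const_mul (Real.cos p))
  have hZ := (hz.add ((((hx.pow 2).sub (hy.pow 2)).const_mul
    (Real.sin p * Real.cos p)).div_const 2)).sub ((hx.const_mul (Real.sin p ^ 2)).mul hy)
  rw [hw.unique (hX.prodMk (hY.prodMk hZ))]
  simp only [alphaForm, contactRotation]
  linear_combination -(v.1 * (γ θ).2.1) * Real.sin_sq_add_cos_sq p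

lemma IsLegendrianKnot.comp_contactRotation {K : S1 → R3} (hK : IsLegendrianKnot K) (p : ℝ) :
    IsLegendrianKnot fun s => contactRotation p (K s) := by
  have hφ : ∀ p, ContDiff ℝ (⊤ : ℕ∞) (contactRotation p) := fun p =>
    contDiff_contactRotation contDiff_const contDiff_id
  have hknot := hK.1.comp (hφ p) ((hφ (-p)).differentiable (by simp))
    (contactRotation_neg_leftInverse p)
  refine isLegendrianKnot_iff_velocity.2 ⟨hknot, fun θ => ?_⟩
  rw [← (isLegendrianKnot_iff_velocity.1 hK).2 θ]
  exact alphaForm_contactRotation p (hasDerivAt_velocity hK.1.1 θ) (hasDerivAt_velocity hknot.1 θ)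

lemma contactRotation_curledKnot (s : S1) :
    contactRotation (Real.pi / 2) (curledKnot 1 0 0 s) = curledKnot 0 1 (Real.pi / 2) s := by
  have hI : cexp ((Real.pi / 2 : ℝ) * I) = I := by
    rw [ofReal_div, ofReal_ofNat, Complex.exp_pi_div_two_mul_I]
  simp only [contactRotation, curledKnot, curledCircle, hI, Real.cos_pi_div_two,
    Real.sin_pi_div_two, ofReal_zero, zero_mul, Complex.exp_zero, one_mul, mul_re, mul_im, I_re,
    I_im]
  ext <;> ring

lemma exists_isLegendrianKnot_isotopy {K : S1 → R3} (hK : IsLegendrianKnot K) (p : ℝ) :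
    ∃ H : ℝ × S1 → R3, IsSmoothFamily H ∧ (∀ s, H (0, s) = K s) ∧
      (∀ s, H (1, s) = contactRotation p (K s)) ∧
      ∀ t ∈ Icc (0 : ℝ) 1, IsLegendrianKnot fun s => H (t, s) := by
  refine ⟨fun q => contactRotation (q.1 * p) (K q.2), ?_, fun s => ?_, fun s => ?_,
    fun t _ => hK.comp_contactRotation (t * p)⟩
  · have h : ContDiff ℝ (⊤ : ℕ∞) fun q : ℝ × R3 => contactRotation (q.1 * p) q.2 :=
      contDiff_contactRotation (contDiff_fst.mul contDiff_const) contDiff_snd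
    exact isSmoothFamily_of_contDiff h hK.1.1
  · simp only [zero_mul, contactRotation_zero]
  · simp only [one_mul]

/-! ### Planar velocity of Legendrian knots -/

/-- The projection of `ℝ³` to the `xy`-plane, identified with `ℂ`, on which the contact planes
project isomorphically. -/
def lagrangianProjection (p : R3) : ℂ := p.1 + p.2.1 * I

lemma lagrangianProjection_re (p : R3) : (lagrangianProjection p).re = p.1 := by
  simp [lagrangianProjection]

lemma lagrangianProjection_im (p : R3) : (lagrangianProjection p).im = p.2.1 := by
  simp [lagrangianProjection]

lemma continuous_lagrangianProjection : Continuous lagrangianProjection := by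
  unfold lagrangianProjection
  fun_prop

lemma lagrangianProjection_smul (c : ℝ) (p : R3) :
    lagrangianProjection (c • p) = c * lagrangianProjection p := by
  simp only [lagrangianProjection, Prod.smul_fst, Prod.smul_snd, smul_eq_mul, ofReal_mul]
  ring

lemma IsLegendrianKnot.lagrangianProjection_velocity_ne_zero {K : S1 → R3}
    (hK : IsLegendrianKnot K) (θ : ℝ) : lagrangianProjection (velocity K θ) ≠ 0 := by
  intro h
  rw [Complex.ext_iff, lagrangianProjection_re, lagrangianProjection_im] at h
  have hz := (isLegendrianKnot_iff_velocity.1 hK).2 θ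
  rw [alphaForm, h.1, zero_re, mul_zero, sub_zero] at hz
  exact (isKnot_iff_velocity_ne_zero.1 hK.1).2.2 θ (Prod.ext h.1 (Prod.ext h.2 hz))

lemma IsSmoothFamily.hasWindingNumber_lagrangianProjection_velocity {H : ℝ × S1 → R3}
    (hH : IsSmoothFamily H) (hL : ∀ t ∈ Icc (0 : ℝ) 1, IsLegendrianKnot fun s => H (t, s)) {n : ℤ}
    (h : HasWindingNumber (fun θ => lagrangianProjection (velocity (fun s => H (0, s)) θ)) n) :
    HasWindingNumber (fun θ => lagrangianProjection (velocity (fun s => H (1, s)) θ)) n := by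
  refine HasWindingNumber.of_homotopy (F := fun p : unitInterval × ℝ =>
    lagrangianProjection (velocity (fun s => H (p.1, s)) p.2)) ?_ (fun p =>
      (hL p.1 p.1.2).lagrangianProjection_velocity_ne_zero p.2) (fun t => ?_) h
  · exact continuous_lagrangianProjection.comp (hH.continuous_velocity.comp
      (continuous_subtype_val.prodMap continuous_id))
  · simp only [(velocity_periodic _).eq]

lemma sq_sub_pos_or_mul_ne_zero {x y : ℝ} (h : x ^ 2 + y ^ 2 = 1) :
    0 < x ^ 2 - y ^ 2 * (9 - 12 * y ^ 2) ∨ x * y * (10 - 12 * y ^ 2) ≠ 0 := by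
  rw [or_iff_not_imp_right, not_not, mul_eq_zero, mul_eq_zero]
  rintro ((rfl | rfl) | hy)
  · have hy : y ^ 2 = 1 := by linarith
    norm_num [hy]
  · have hx : x ^ 2 = 1 := by linarith
    norm_num [hx]
  · have hy : y ^ 2 = 5 / 6 := by linarith
    have hx : x ^ 2 = 1 / 6 := by linarith
    norm_num [hx, hy]

lemma mem_slitPlane_of_curledCircleTangent_one_zero {z : ℂ} (hz : ‖z‖ = 1) :
    I * z * lagrangianProjection (curledCircleTangent 1 0 z) ∈ slitPlane := by
  have h := (add_comm _ _).trans (sq_re_add_sq_im_of_norm_eq_one hz)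
  have hre : (I * z * lagrangianProjection (curledCircleTangent 1 0 z)).re =
      z.im ^ 2 - z.re ^ 2 * (9 - 12 * z.re ^ 2) := by
    simp only [mul_re, mul_im, I_re, I_im, lagrangianProjection_re, lagrangianProjection_im,
      curledCircleTangent]
    linear_combination -8 * z.re ^ 2 * h
  have him : (I * z * lagrangianProjection (curledCircleTangent 1 0 z)).im =
      -(z.im * z.re * (10 - 12 * z.re ^ 2)) := by
    simp only [mul_re, mul_im, I_re, I_im, lagrangianProjection_re, lagrangianProjection_im,
      curledCircleTangent]
    linear_combination -8 * z.re * z.im * h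
  rw [mem_slitPlane_iff, hre, him, neg_ne_zero]
  exact sq_sub_pos_or_mul_ne_zero h

lemma mem_slitPlane_of_curledCircleTangent_zero_one {z : ℂ} (hz : ‖z‖ = 1) :
    -I * lagrangianProjection (curledCircleTangent 0 1 z) * z ∈ slitPlane := by
  have h := sq_re_add_sq_im_of_norm_eq_one hz
  have hre : (-I * lagrangianProjection (curledCircleTangent 0 1 z) * z).re =
      z.re ^ 2 - z.im ^ 2 * (9 - 12 * z.im ^ 2) := by
    simp only [mul_re, mul_im, neg_re, neg_im, I_re, I_im, lagrangianProjection_re,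
      lagrangianProjection_im, curledCircleTangent]
    linear_combination -8 * z.im ^ 2 * h
  have him : (-I * lagrangianProjection (curledCircleTangent 0 1 z) * z).im =
      z.re * z.im * (10 - 12 * z.im ^ 2) := by
    simp only [mul_re, mul_im, neg_re, neg_im, I_re, I_im, lagrangianProjection_re,
      lagrangianProjection_im, curledCircleTangent]
    linear_combination 8 * z.re * z.im * h
  rw [mem_slitPlane_iff, hre, him]
  exact sq_sub_pos_or_mul_ne_zero h

lemma hasWindingNumber_velocity_curledKnot_one_zero (p : ℝ) :
    HasWindingNumber (fun θ => lagrangianProjection (velocity (curledKnot 1 0 p) θ)) (-1) := by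
  have hcont : Continuous (velocity (curledKnot 1 0 p)) :=
    ((isKnot_curledKnot (.inr rfl) p).1.comp S1.contMDiff_exp).contDiff.continuous_deriv (by simp)
  refine hasWindingNumber_cexp_mul_I.of_mul_mem_slitPlane (c := I * cexp (p * I))
    (continuous_lagrangianProjection.comp hcont) (congrArg _ (velocity_periodic _).eq)
    fun θ => ?_
  rw [velocity_curledKnot, mul_assoc I, ← Complex.exp_add, ← add_mul, ← ofReal_add]
  exact mem_slitPlane_of_curledCircleTangent_one_zero (norm_exp_ofReal_mul_I _)

lemma exists_lift_of_range_eq {K : S1 → R3} (hK : ContMDiff (𝓡 1) 𝓘(ℝ, R3) (⊤ : ℕ∞) K)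
    {l m p : ℝ} (h : l = 0 ∨ m = 0) (hrange : range K = range (curledKnot l m p)) :
    ∃ (z : ℝ → ℂ) (q : ℝ → ℝ), (∀ θ, ‖z θ‖ = 1) ∧ z (2 * Real.pi) = z 0 ∧ Continuous q ∧
      (∀ θ, HasDerivAt z (q θ * I * z θ) θ) ∧ (∀ θ, K (S1.exp θ) = curledCircle l m (z θ)) ∧
      ∀ θ, velocity K θ = q θ • curledCircleTangent l m (z θ) := by
  let z θ := uncurl l m (K (S1.exp θ))
  have hmem : ∀ θ, ∃ w, ‖w‖ = 1 ∧ curledCircle l m w = K (S1.exp θ) := fun θ => by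
    have hθ : K (S1.exp θ) ∈ range K := mem_range_self _
    rw [hrange, range_curledKnot] at hθ
    simpa using hθ
  have hz : ∀ θ, ‖z θ‖ = 1 ∧ K (S1.exp θ) = curledCircle l m (z θ) := fun θ => by
    obtain ⟨w, hw, hwK⟩ := hmem θ
    have hzw : z θ = w := by simp only [z, ← hwK, uncurl_curledCircle h]
    rw [hzw]
    exact ⟨hw, hwK.symm⟩
  have hsmooth : ContDiff ℝ 1 z :=
    ((contDiff_uncurl l m).comp (hK.comp S1.contMDiff_exp).contDiff).of_le (by simp)
  obtain ⟨q, hqc, hq⟩ := exists_angularVelocity hsmooth fun θ => (hz θ).1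
  refine ⟨z, q, fun θ => (hz θ).1, ?_, hqc, hq, fun θ => (hz θ).2, fun θ => ?_⟩
  · simp only [z, S1.periodic_exp.eq]
  · rw [← (hasDerivAt_curledCircle l m (hq θ)).deriv, velocity]
    simp only [(hz _).2]

lemma angularVelocity_pos_of_hasWindingNumber {z : ℝ → ℂ} {q : ℝ → ℝ} (hz : ∀ θ, ‖z θ‖ = 1)
    (hper : z (2 * Real.pi) = z 0) (hqc : Continuous q)
    (hq : ∀ θ, HasDerivAt z (q θ * I * z θ) θ) (hq0 : ∀ θ, q θ ≠ 0)
    (hw : HasWindingNumber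
      (fun θ => q θ * lagrangianProjection (curledCircleTangent 0 1 (z θ))) (-1)) (θ : ℝ) :
    0 < q θ := by
  have hzc : Continuous z := continuous_iff_continuousAt.2 fun θ => (hq θ).continuousAt
  have hmul : ∀ {r : ℝ} {w : ℂ}, 0 < r → w ∈ slitPlane → r * w ∈ slitPlane := fun {r w} hr hw => by
    rw [mem_slitPlane_iff, re_ofReal_mul, im_ofReal_mul]
    exact hw.imp (mul_pos hr) (mul_ne_zero hr.ne')
  have hwz : HasWindingNumber z (- -1) := by
    rcases forall_pos_or_forall_neg_of_continuous hqc hq0 with hpos | hneg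
    · refine hw.of_mul_mem_slitPlane hzc hper (c := -I) fun θ => ?_
      convert hmul (hpos θ) (mem_slitPlane_of_curledCircleTangent_zero_one (hz θ)) using 1
      ring
    · refine hw.of_mul_mem_slitPlane hzc hper (c := I) fun θ => ?_
      convert hmul (neg_pos.2 (hneg θ)) (mem_slitPlane_of_curledCircleTangent_zero_one (hz θ))
        using 1
      push_cast
      ring
  exact hwz.angularVelocity_pos (by norm_num) hq hq0 θ

/-- The winding number of the velocity determines the orientation of the curve, hence the direction
in which it crosses the axis at its left intersection point. -/
lemma snd_fst_velocity_neg_of_isAxisPair {K : S1 → R3} (hK : IsLegendrianKnot K) {p : ℝ}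
    (hrange : range K = range (curledKnot 0 1 p))
    (hw : HasWindingNumber (fun θ => lagrangianProjection (velocity K θ)) (-1)) {θ η : ℝ}
    (h : IsAxisPair K θ η) : (velocity K θ).2.1 < 0 := by
  obtain ⟨z, q, hz, hper, hqc, hq, hKz, hvel⟩ := exists_lift_of_range_eq hK.1.1 (.inl rfl) hrange
  have hq0 : ∀ u, q u ≠ 0 := fun u hu =>
    (isKnot_iff_velocity_ne_zero.1 hK.1).2.2 u (by simp [hvel, hu])
  simp only [hvel, lagrangianProjection_smul] at hw
  have hpos := angularVelocity_pos_of_hasWindingNumber hz hper hqc hq hq0 hw θ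
  have haxis : ∀ u, K (S1.exp u) ∈ xAxisSet →
      (K (S1.exp u)).1 = (z u).re ∧ ((z u).re = 1 ∨ (z u).re = -1) := fun u hu => by
    have him : (z u).im = 0 := by rwa [hKz, curledCircle_mem_xAxisSet_iff (.inl rfl)] at hu
    have hsq := sq_re_add_sq_im_of_norm_eq_one (hz u)
    exact ⟨by simp [hKz, curledCircle, him], sq_eq_one_iff.1 (by simpa [him] using hsq)⟩
  obtain ⟨hθ, hη, hlt⟩ := h
  obtain ⟨hxθ, hreθ⟩ := haxis θ hθ
  obtain ⟨hxη, hreη⟩ := haxis η hη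
  have hre : (z θ).re = -1 := by
    rw [hxθ, hxη] at hlt
    refine hreθ.resolve_left fun h1 => ?_
    rcases hreη with h2 | h2 <;> linarith
  simp [hvel, curledCircleTangent, hre, hpos]

lemma isAxisPair_curledKnot_zero (l m : ℝ) : IsAxisPair (curledKnot l m 0) Real.pi 0 := by
  simp [IsAxisPair, curledKnot_exp, curledCircle, xAxisSet]

lemma not_exists_isotopy_curledKnot (p : ℝ) :
    ¬ ∃ H : ℝ × S1 → R3, IsSmoothFamily H ∧
      (∀ t ∈ Icc (0 : ℝ) 1, IsStronglyInvertibleKnot (fun s => H (t, s)) ∧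
        IsLegendrianKnot fun s => H (t, s)) ∧
      (∀ s, H (0, s) = curledKnot 1 0 0 s) ∧
      range (fun s => H (1, s)) = range (curledKnot 0 1 p) := by
  rintro ⟨H, hH, hSL, h0, h1⟩
  have hS t ht := (hSL t ht).1
  have hL t ht := (hSL t ht).2
  have h0 : (fun s => H (0, s)) = curledKnot 1 0 0 := funext h0
  have hw := hH.hasWindingNumber_lagrangianProjection_velocity hL
    (h0 ▸ hasWindingNumber_velocity_curledKnot_one_zero 0)
  obtain ⟨θ, hθ, η, hη, hpair⟩ := (hS 1 (right_mem_Icc.2 zero_le_one)).exists_isAxisPair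
  have hneg := snd_fst_velocity_neg_of_isAxisPair (hL 1 (right_mem_Icc.2 zero_le_one)) h1 hw hpair
  have hpos : 0 < (velocity (fun s => H (0, s)) Real.pi).2.1 := by
    rw [h0, velocity_curledKnot]
    norm_num [curledCircleTangent]
  have hmul := slope_mul_pos_of_isAxisPair hH hS hL
    (p := (Real.pi, 0)) (p' := (θ, η)) ⟨⟨Real.pi_pos.le, by linarith [Real.pi_pos]⟩,
      left_mem_Icc.2 Real.two_pi_pos.le⟩ ⟨hθ, hη⟩ (h0 ▸ isAxisPair_curledKnot_zero 1 0) hpair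
  exact hmul.not_gt (mul_neg_of_pos_of_neg hpos hneg)

/-- There exist two strongly invertible Legendrian unknots which are Legendrian isotopic
and equivalent as strongly invertible knots, but not equivalent as strongly invertible
Legendrian knots. -/
theorem exists_inequivalent_strongly_invertible_legendrian_unknots :
    ∃ K₁ K₂ : S1 → R3,
      -- (a) both are strongly invertible Legendrian knots
      (IsStronglyInvertibleKnot K₁ ∧ IsLegendrianKnot K₁) ∧
      (IsStronglyInvertibleKnot K₂ ∧ IsLegendrianKnot K₂) ∧
      -- (b) both are unknotted
      (∃ H : ℝ × S1 → R3, IsSmoothFamily H ∧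
        (∀ s, H (0, s) = K₁ s) ∧ (∀ s, H (1, s) = roundCircle s) ∧
        ∀ t ∈ Set.Icc (0 : ℝ) 1, IsKnot fun s => H (t, s)) ∧
      (∃ H : ℝ × S1 → R3, IsSmoothFamily H ∧
        (∀ s, H (0, s) = K₂ s) ∧ (∀ s, H (1, s) = roundCircle s) ∧
        ∀ t ∈ Set.Icc (0 : ℝ) 1, IsKnot fun s => H (t, s)) ∧
      -- (c) K₁ and K₂ are Legendrian isotopic (as unoriented Legendrian knots)
      (∃ H : ℝ × S1 → R3, IsSmoothFamily H ∧
        (∀ s, H (0, s) = K₁ s) ∧ (∀ s, H (1, s) = K₂ s) ∧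
        ∀ t ∈ Set.Icc (0 : ℝ) 1, IsLegendrianKnot fun s => H (t, s)) ∧
      -- (d) K₁ and K₂ are equivalent as strongly invertible knots
      (∃ H : ℝ × S1 → R3, IsSmoothFamily H ∧
        (∀ s, H (0, s) = K₁ s) ∧ (∀ s, H (1, s) = K₂ s) ∧
        ∀ t ∈ Set.Icc (0 : ℝ) 1, IsStronglyInvertibleKnot fun s => H (t, s)) ∧
      -- (e) but K₁ and K₂ are not equivalent as strongly invertible Legendrian knots
      ¬ ∃ H : ℝ × S1 → R3, IsSmoothFamily H ∧
          (∀ t ∈ Set.Icc (0 : ℝ) 1,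
            IsStronglyInvertibleKnot (fun s => H (t, s)) ∧
            IsLegendrianKnot fun s => H (t, s)) ∧
          (∀ s, H (0, s) = K₁ s) ∧
          Set.range (fun s => H (1, s)) = Set.range K₂ := by
  have hK : IsLegendrianKnot (curledKnot 1 0 0) := isLegendrianKnot_curledKnot_one_zero 0
  have hrot : (fun s => contactRotation (Real.pi / 2) (curledKnot 1 0 0 s)) =
      curledKnot 0 1 (Real.pi / 2) := funext contactRotation_curledKnot
  refine ⟨curledKnot 1 0 0, curledKnot 0 1 (Real.pi / 2),
    ⟨isStronglyInvertibleKnot_curledKnot (.inr rfl) 0, hK⟩,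
    ⟨isStronglyInvertibleKnot_curledKnot (.inl rfl) _, hrot ▸ hK.comp_contactRotation _⟩,
    exists_isKnot_isotopy_roundCircle (.inr rfl) 0, exists_isKnot_isotopy_roundCircle (.inl rfl) _,
    ?_, exists_isStronglyInvertibleKnot_isotopy 1 1 _, not_exists_isotopy_curledKnot _⟩
  simpa only [contactRotation_curledKnot] using
    exists_isLegendrianKnot_isotopy hK (Real.pi / 2)
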